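/- arXiv:1802.10286 — 3 statements merged into one kernel-verified Lean document; each statement's English description precedes it below -/
import Mathlib

section
/- For every ε > ε* and every τ with 0 ≤ τ < τ*, every k ∈ ℕ₀ and every λ ∈ ℂ with D_k(λ; τ, ε) = 0 satisfies Re λ < 0; i.e., the constant steady state (3, 2/9) is linearly asymptotically stable for τ ∈ [0, τ*) and ε > ε*. -/
/-- `p_k` coefficient of the `k`-th mode characteristic function. -/
noncomputable def pk (ε : ℝ) (k : ℕ) : ℝ := 4 * (ε + 1) * (k : ℝ) ^ 2 * Real.pi ^ 2 + 1

/-- `r_k` coefficient of the `k`-th mode characteristic function. -/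
noncomputable def rk (ε : ℝ) (k : ℕ) : ℝ :=
  16 * ε * (k : ℝ) ^ 4 * Real.pi ^ 4 + 4 * (k : ℝ) ^ 2 * Real.pi ^ 2

/-- `s_k` coefficient of the `k`-th mode characteristic function. -/
noncomputable def sk : ℝ := 23 / 3

/-- `q_k` coefficient of the `k`-th mode characteristic function. -/
noncomputable def qk (ε : ℝ) (k : ℕ) : ℝ :=
  4 * (9 * ε - 4 / 3) * (k : ℝ) ^ 2 * Real.pi ^ 2 + 9

/-- The `k`-th mode characteristic function
`D_k(λ; τ, ε) = λ² + p_k λ + r_k + (s_k λ + q_k) e^{-λτ}`. -/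
noncomputable def Dk (ε τ : ℝ) (k : ℕ) (z : ℂ) : ℂ :=
  z ^ 2 + (pk ε k : ℂ) * z + (rk ε k : ℂ) +
    ((sk : ℂ) * z + (qk ε k : ℂ)) * Complex.exp (-z * (τ : ℂ))

/-- The critical diffusion ratio `ε* = (4π²/3 - 9)/(16π⁴ + 36π²)`. -/
noncomputable def epsStar : ℝ := (4 * Real.pi ^ 2 / 3 - 9) / (16 * Real.pi ^ 4 + 36 * Real.pi ^ 2)

/-- The zeroth-mode characteristic function `D_0(λ; τ) = λ² + λ + ((23/3)λ + 9)e^{-λτ}`. -/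
noncomputable def D0 (τ : ℝ) (z : ℂ) : ℂ :=
  z ^ 2 + z + ((23 / 3 : ℂ) * z + 9) * Complex.exp (-z * (τ : ℂ))

/-- The critical Hopf frequency `ω* = √((520 + √296644)/18)`. -/
noncomputable def omegaStar : ℝ := Real.sqrt ((520 + Real.sqrt 296644) / 18)

/-!
Let `D(z) = z² + p z + r + (s z + q) e^{-zτ}`. A root with `0 ≤ Re z` satisfies
`‖z² + p z + r‖ ≤ ‖s z + q‖`, since then `‖e^{-zτ}‖ ≤ 1`.

For `k ≥ 1` this is impossible as soon as `|q_k| < r_k` and `s_k² ≤ p_k² - 2 r_k`; the inequality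
`-q_k < r_k` bounds `ε` from below by a function of `k` which is largest at `k = 1`, where it
equals `ε*`.

For `k = 0` write `z = x + i y` with `y > 0`. If `x y + Im D₀(i y; τ) > 0`, then
`Re (D₀(z) / z) > 0` and `z` is not a root. Now `Im D₀(i y; τ)` decreases with `τ`, and at `τ = τ*`
it is a concave function of `y` which vanishes at `0` and at `ω*`, so it is nonnegative for
`y ≤ ω*`. The norm inequality only allows `y` to exceed `ω*` by a small multiple of `x`, and the
term `x y` absorbs this excess.
-/

open Real in
theorem lt_pi_div_two_sub_cos {θ : ℝ} (hθ : θ < 2 * π) (hcos : 0 < cos θ)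
    (hsin : 0 ≤ sin θ) : θ < π / 2 - cos θ := by
  have hle_pi : θ ≤ π := by
    by_contra! hlt
    have := sin_neg_of_neg_of_neg_pi_lt (x := θ - 2 * π) (by linarith) (by linarith)
    rw [sin_sub_two_pi] at this
    linarith
  have hlt : θ < π / 2 := by
    by_contra! hle
    exact hcos.not_ge (cos_nonpos_of_pi_div_two_le_of_le hle (by linarith))
  have := sin_lt (sub_pos.2 hlt)
  rw [sin_pi_div_two_sub] at this
  linarith

section DelayQuadratic

open Real ComplexConjugate

/-- The characteristic function `z² + p z + r + (s z + q) e^{-zτ}` of a planar linear system with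
one discrete delay `τ`. -/
noncomputable def delayQuadratic (p r s q τ : ℝ) (z : ℂ) : ℂ :=
  z ^ 2 + p * z + r + (s * z + q) * Complex.exp (-z * τ)

/-- The imaginary part of `delayQuadratic p r s q τ` at the point `i y` of the imaginary axis; it
does not depend on `r`. -/
noncomputable def delayAxisIm (p s q τ y : ℝ) : ℝ :=
  y * (p + s * cos (y * τ)) - q * sin (y * τ)

variable {p r s q τ T ω y b : ℝ} {z : ℂ}

theorem delayQuadratic_conj (p r s q τ : ℝ) (z : ℂ) :
    delayQuadratic p r s q τ (conj z) = conj (delayQuadratic p r s q τ z) := by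
  simp [delayQuadratic, ← Complex.exp_conj]

theorem delayQuadratic_re (p r s q τ : ℝ) (z : ℂ) :
    (delayQuadratic p r s q τ z).re = z.re ^ 2 - z.im ^ 2 + p * z.re + r + exp (-(z.re * τ)) *
      ((s * z.re + q) * cos (z.im * τ) + s * z.im * sin (z.im * τ)) := by
  simp only [delayQuadratic, pow_two, neg_mul, Complex.add_re, Complex.mul_re, Complex.ofReal_re,
    Complex.ofReal_im, zero_mul, sub_zero, Complex.exp_re, Complex.neg_re, mul_zero, Complex.neg_im,
    Complex.mul_im, zero_add, cos_neg, Complex.add_im, add_zero, Complex.exp_im, sin_neg]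
  ring

theorem delayQuadratic_im (p r s q τ : ℝ) (z : ℂ) :
    (delayQuadratic p r s q τ z).im = 2 * z.re * z.im + p * z.im + exp (-(z.re * τ)) *
      (s * z.im * cos (z.im * τ) - (s * z.re + q) * sin (z.im * τ)) := by
  simp only [delayQuadratic, pow_two, neg_mul, Complex.add_im, Complex.mul_im, Complex.ofReal_re,
    Complex.ofReal_im, zero_mul, add_zero, Complex.add_re, Complex.mul_re, sub_zero, Complex.exp_im,
    Complex.neg_re, mul_zero, Complex.neg_im, zero_add, sin_neg, Complex.exp_re, cos_neg]
  ring

theorem delayQuadratic_I_mul_re (p r s q τ y : ℝ) :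
    (delayQuadratic p r s q τ (Complex.I * y)).re =
      r - y ^ 2 + q * cos (y * τ) + s * y * sin (y * τ) := by
  simp only [delayQuadratic_re, Complex.I_mul_re, Complex.I_mul_im, Complex.ofReal_re,
    Complex.ofReal_im, neg_zero, zero_mul, mul_zero, zero_add, exp_zero]
  ring

theorem delayQuadratic_I_mul_im (p r s q τ y : ℝ) :
    (delayQuadratic p r s q τ (Complex.I * y)).im = delayAxisIm p s q τ y := by
  simp only [delayQuadratic_im, delayAxisIm, Complex.I_mul_re, Complex.I_mul_im, Complex.ofReal_re,
    Complex.ofReal_im, neg_zero, zero_mul, mul_zero, zero_add, exp_zero]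
  ring

theorem sq_norm_sq_add_mul_add (p r : ℝ) (z : ℂ) : ‖z ^ 2 + p * z + r‖ ^ 2 =
    (z.re ^ 2 - z.im ^ 2 + p * z.re + r) ^ 2 + (2 * z.re * z.im + p * z.im) ^ 2 := by
  rw [Complex.sq_norm, Complex.normSq_apply]
  simp only [pow_two, Complex.add_re, Complex.mul_re, Complex.ofReal_re, Complex.ofReal_im,
    zero_mul, sub_zero, Complex.add_im, Complex.mul_im, add_zero]
  ring

theorem sq_norm_mul_add (s q : ℝ) (z : ℂ) :
    ‖s * z + q‖ ^ 2 = (s * z.re + q) ^ 2 + (s * z.im) ^ 2 := by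
  rw [Complex.sq_norm, Complex.normSq_apply]
  simp [pow_two]

theorem norm_sq_add_mul_add_le_of_delayQuadratic_eq_zero (hτ : 0 ≤ τ) (hz : 0 ≤ z.re)
    (h : delayQuadratic p r s q τ z = 0) : ‖z ^ 2 + p * z + r‖ ≤ ‖s * z + q‖ := by
  have hexp : ‖Complex.exp (-z * τ)‖ ≤ 1 := by
    simpa [Complex.norm_exp] using mul_nonneg hz hτ
  calc ‖z ^ 2 + p * z + r‖ = ‖s * z + q‖ * ‖Complex.exp (-z * τ)‖ := by
        rw [eq_neg_of_add_eq_zero_left h, norm_neg, norm_mul]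
    _ ≤ ‖s * z + q‖ := mul_le_of_le_one_right (norm_nonneg _) hexp

theorem norm_mul_add_lt_norm_sq_add_mul_add (hp : 0 ≤ p) (hqr : |q| < r)
    (hs : s ^ 2 ≤ p ^ 2 - 2 * r) (hz : 0 ≤ z.re) : ‖s * z + q‖ < ‖z ^ 2 + p * z + r‖ := by
  have hr : 0 < r := (abs_nonneg q).trans_lt hqr
  have hsp : |s| ≤ p := abs_le_of_sq_le_sq (by linarith) hp
  have hreal : |s * z.re + q| < z.re ^ 2 + p * z.re + r :=
    calc |s * z.re + q| ≤ |s| * z.re + |q| := by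
          simpa [abs_mul, abs_of_nonneg hz] using abs_add_le (s * z.re) q
      _ < p * z.re + r := add_lt_add_of_le_of_lt (mul_le_mul_of_nonneg_right hsp hz) hqr
      _ ≤ z.re ^ 2 + p * z.re + r := by linarith [sq_nonneg z.re]
  have hsq : (s * z.re + q) ^ 2 < (z.re ^ 2 + p * z.re + r) ^ 2 :=
    sq_lt_sq.2 (hreal.trans_le (le_abs_self _))
  have hcross : 0 ≤ z.im ^ 2 *
      (z.im ^ 2 + 2 * z.re ^ 2 + 2 * (p * z.re) + (p ^ 2 - 2 * r - s ^ 2)) :=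
    mul_nonneg (sq_nonneg _) (by linarith [sq_nonneg z.im, sq_nonneg z.re, mul_nonneg hp hz])
  refine lt_of_pow_lt_pow_left₀ 2 (norm_nonneg _) ?_
  rw [sq_norm_sq_add_mul_add, sq_norm_mul_add]
  linarith

theorem delayQuadratic_ne_zero_of_abs_lt (hp : 0 ≤ p) (hqr : |q| < r)
    (hs : s ^ 2 ≤ p ^ 2 - 2 * r) (hτ : 0 ≤ τ) (hz : 0 ≤ z.re) :
    delayQuadratic p r s q τ z ≠ 0 := fun h ↦
  (norm_mul_add_lt_norm_sq_add_mul_add hp hqr hs hz).not_ge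
    (norm_sq_add_mul_add_le_of_delayQuadratic_eq_zero hτ hz h)

theorem delayQuadratic_ne_zero_of_im_eq_zero (hp : 0 ≤ p) (hr : 0 ≤ r) (hs : 0 ≤ s) (hq : 0 < q)
    (hz : 0 ≤ z.re) (him : z.im = 0) : delayQuadratic p r s q τ z ≠ 0 := by
  intro h
  have hre := delayQuadratic_re p r s q τ z
  simp only [h, him, Complex.zero_re, zero_mul, mul_zero, cos_zero, sin_zero] at hre
  have : 0 < z.re ^ 2 + p * z.re + r + exp (-(z.re * τ)) * (s * z.re + q) := by positivity
  linarith

theorem delayQuadratic_ne_zero_of_delayAxisIm_pos (hp : 0 ≤ p) (hs : 0 ≤ s) (hq : 0 ≤ q)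
    (hτ : 0 ≤ τ) (hx : 0 ≤ z.re) (hy : 0 < z.im) (hcos : 0 ≤ cos (z.im * τ))
    (hpos : 0 < z.re * z.im + delayAxisIm p s q τ z.im) :
    delayQuadratic p 0 s q τ z ≠ 0 := by
  intro h
  have hre := delayQuadratic_re p 0 s q τ z
  have him := delayQuadratic_im p 0 s q τ z
  rw [h] at hre him
  simp only [Complex.zero_re, Complex.zero_im, delayAxisIm] at hre him hpos
  have hE0 : 0 < exp (-(z.re * τ)) := exp_pos _
  have hE1 : exp (-(z.re * τ)) ≤ 1 := exp_le_one_iff.2 (neg_nonpos.2 (mul_nonneg hx hτ))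
  generalize exp (-(z.re * τ)) = E at *
  generalize cos (z.im * τ) = c at *
  generalize sin (z.im * τ) = n at *
  generalize z.re = x at *
  generalize z.im = y at *
  set A := (x + p) * (x ^ 2 + y ^ 2)
  set B := s * c * (x ^ 2 + y ^ 2) + q * (x * c - y * n)
  -- `A + E * B` is the real part of `conj z * delayQuadratic p 0 s q τ z`.
  have hroot : A + E * B = 0 := by linear_combination -x * hre - y * him
  have hA : 0 ≤ A := by positivity
  have hAB : 0 < A + B := by
    have : 0 ≤ (x + p) * x ^ 2 + s * c * x ^ 2 + q * (x * c) := by positivity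
    have : A + B = y * (x * y + (y * (p + s * c) - q * n)) +
        ((x + p) * x ^ 2 + s * c * x ^ 2 + q * (x * c)) := by ring
    linarith [mul_pos hy hpos]
  have : 0 < (1 - E) * A + E * (A + B) :=
    add_pos_of_nonneg_of_pos (mul_nonneg (sub_nonneg.2 hE1) hA) (mul_pos hE0 hAB)
  linarith

theorem delayAxisIm_lt_delayAxisIm_of_lt (p : ℝ) (hs : 0 < s) (hq : 0 ≤ q) (hy : 0 < y)
    (hτ : 0 ≤ τ) (hτT : τ < T) (hyT : y * T ≤ π / 2) :
    delayAxisIm p s q T y < delayAxisIm p s q τ y := by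
  have hyτ : 0 ≤ y * τ := mul_nonneg hy.le hτ
  have hlt : y * τ < y * T := mul_lt_mul_of_pos_left hτT hy
  have hcos : cos (y * T) < cos (y * τ) := cos_lt_cos_of_nonneg_of_le_pi_div_two hyτ hyT hlt
  have hsin : sin (y * τ) ≤ sin (y * T) :=
    sin_le_sin_of_le_of_le_pi_div_two (by linarith) hyT hlt.le
  unfold delayAxisIm
  exact (sub_lt_sub_right (by gcongr) _).trans_le (sub_le_sub_left (by gcongr) _)

theorem hasDerivAt_delayAxisIm (p s q T y : ℝ) :
    HasDerivAt (delayAxisIm p s q T)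
      (p + s * cos (y * T) - y * (s * T * sin (y * T)) - q * T * cos (y * T)) y := by
  have hid : HasDerivAt (fun y ↦ y * T) T y := hasDerivAt_mul_const T
  refine (((hasDerivAt_id y).mul ((hid.cos.const_mul s).const_add p)).sub
    (hid.sin.const_mul q)).congr_deriv ?_
  simp only [id]
  ring

theorem hasDerivAt_deriv_delayAxisIm (p s q T y : ℝ) :
    HasDerivAt (deriv (delayAxisIm p s q T))
      (-(T * (2 * s - q * T) * sin (y * T)) - s * y * T ^ 2 * cos (y * T)) y := by
  have hid : HasDerivAt (fun y ↦ y * T) T y := hasDerivAt_mul_const T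
  rw [funext fun y ↦ (hasDerivAt_delayAxisIm p s q T y).deriv]
  refine ((((hid.cos.const_mul s).const_add p).sub
    ((hasDerivAt_id y).mul (hid.sin.const_mul (s * T)))).sub
    (hid.cos.const_mul (q * T))).congr_deriv ?_
  simp only [id]
  ring

theorem concaveOn_delayAxisIm (p : ℝ) (hs : 0 ≤ s) (hT : 0 ≤ T) (hqT : q * T ≤ 2 * s)
    (hbT : b * T ≤ π / 2) : ConcaveOn ℝ (Set.Icc 0 b) (delayAxisIm p s q T) := by
  have hdiff : Differentiable ℝ (delayAxisIm p s q T) := fun y ↦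
    (hasDerivAt_delayAxisIm p s q T y).differentiableAt
  refine concaveOn_of_deriv2_nonpos (convex_Icc 0 b) hdiff.continuous.continuousOn
    hdiff.differentiableOn (fun y _ ↦
      (hasDerivAt_deriv_delayAxisIm p s q T y).differentiableAt.differentiableWithinAt) ?_
  intro y hy
  rw [interior_Icc] at hy
  have hyT : 0 ≤ y * T := mul_nonneg hy.1.le hT
  have hyT' : y * T ≤ π / 2 := (mul_le_mul_of_nonneg_right hy.2.le hT).trans hbT
  have hsin : 0 ≤ sin (y * T) := sin_nonneg_of_nonneg_of_le_pi hyT (by linarith)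
  have hcos : 0 ≤ cos (y * T) := cos_nonneg_of_neg_pi_div_two_le_of_le (by linarith) hyT'
  have hsin_term : 0 ≤ T * (2 * s - q * T) * sin (y * T) :=
    mul_nonneg (mul_nonneg hT (sub_nonneg.2 hqT)) hsin
  have hcos_term : 0 ≤ s * y * T ^ 2 * cos (y * T) :=
    mul_nonneg (mul_nonneg (mul_nonneg hs hy.1.le) (sq_nonneg T)) hcos
  rw [Function.iterate_succ_apply, Function.iterate_one,
    (hasDerivAt_deriv_delayAxisIm p s q T y).deriv]
  linarith

theorem delayAxisIm_nonneg_of_le_root (hs : 0 ≤ s) (hT : 0 ≤ T) (hqT : q * T ≤ 2 * s)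
    (hωT : ω * T ≤ π / 2) (hroot : delayAxisIm p s q T ω = 0) (hy : 0 ≤ y) (hyω : y ≤ ω) :
    0 ≤ delayAxisIm p s q T y := by
  have hω : 0 ≤ ω := hy.trans hyω
  have hzero : delayAxisIm p s q T 0 = 0 := by simp [delayAxisIm]
  simpa [hzero, hroot] using (concaveOn_delayAxisIm p hs hT hqT hωT).min_le_of_mem_Icc
    (Set.left_mem_Icc.2 hω) (Set.right_mem_Icc.2 hω) ⟨hy, hyω⟩

theorem delayAxisIm_sub_le (hp : 0 ≤ p) (hs : 0 ≤ s) (hq : 0 ≤ q) (hT : 0 ≤ T) (hω : 0 ≤ ω)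
    (hωy : ω ≤ y) (hyT : y * T ≤ π / 2) :
    delayAxisIm p s q T ω - (ω * s + q) * (T * (y - ω)) ≤ delayAxisIm p s q T y := by
  have hd : |y * T - ω * T| = T * (y - ω) := by
    rw [abs_of_nonneg (by linarith [mul_le_mul_of_nonneg_right hωy hT])]
    ring
  have hcos : cos (ω * T) - T * (y - ω) ≤ cos (y * T) := by
    linarith [abs_le.1 (hd ▸ abs_cos_sub_cos_le (y * T) (ω * T))]
  have hsin : sin (y * T) ≤ sin (ω * T) + T * (y - ω) := by
    linarith [abs_le.1 (hd ▸ abs_sin_sub_sin_le (y * T) (ω * T))]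
  have hcos0 : 0 ≤ cos (y * T) := cos_nonneg_of_neg_pi_div_two_le_of_le
    (by linarith [pi_pos, mul_nonneg (hω.trans hωy) hT]) hyT
  have hinc : 0 ≤ (y - ω) * (p + s * cos (y * T)) :=
    mul_nonneg (sub_nonneg.2 hωy) (by positivity)
  unfold delayAxisIm
  linarith [mul_le_mul_of_nonneg_left hcos (mul_nonneg hω hs), mul_le_mul_of_nonneg_left hsin hq]

theorem cos_mul_eq_of_delayQuadratic_I_mul_eq_zero
    (h : delayQuadratic p r s q τ (Complex.I * ω) = 0) :
    cos (ω * τ) * (q ^ 2 + s ^ 2 * ω ^ 2) = q * (ω ^ 2 - r) - p * s * ω ^ 2 := by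
  have hre := delayQuadratic_I_mul_re p r s q τ ω
  have him := delayQuadratic_I_mul_im p r s q τ ω
  simp only [h, Complex.zero_re, Complex.zero_im, delayAxisIm] at hre him
  linear_combination -q * hre - s * ω * him

theorem sin_mul_eq_of_delayQuadratic_I_mul_eq_zero
    (h : delayQuadratic p r s q τ (Complex.I * ω) = 0) :
    sin (ω * τ) * (q ^ 2 + s ^ 2 * ω ^ 2) = s * ω * (ω ^ 2 - r) + p * q * ω := by
  have hre := delayQuadratic_I_mul_re p r s q τ ω
  have him := delayQuadratic_I_mul_im p r s q τ ω
  simp only [h, Complex.zero_re, Complex.zero_im, delayAxisIm] at hre him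
  linear_combination -s * ω * hre + q * him

end DelayQuadratic

section Modes

open Real

theorem Dk_eq_delayQuadratic (ε τ : ℝ) (k : ℕ) (z : ℂ) :
    Dk ε τ k z = delayQuadratic (pk ε k) (rk ε k) sk (qk ε k) τ z :=
  rfl

theorem Dk_zero_eq_delayQuadratic (ε τ : ℝ) (z : ℂ) :
    Dk ε τ 0 z = delayQuadratic 1 0 (23 / 3) 9 τ z := by
  simp [Dk_eq_delayQuadratic, pk, rk, sk, qk]

theorem D0_eq_delayQuadratic (τ : ℝ) (z : ℂ) :
    D0 τ z = delayQuadratic 1 0 (23 / 3) 9 τ z := by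
  simp [D0, delayQuadratic]

/-- The decay rate `d (kπ)²`, with `d = 4`, which diffusion contributes to the `k`-th mode. -/
noncomputable def modeRate (k : ℕ) : ℝ := 4 * π ^ 2 * (k : ℝ) ^ 2

/-- The diffusion ratio at which `r + q` vanishes for a mode with `modeRate` equal to `X`. -/
noncomputable def turingRatio (X : ℝ) : ℝ := (X / 3 - 9) / (X ^ 2 + 9 * X)

variable {X Y ε : ℝ} {k : ℕ}

theorem pk_eq_modeRate (ε : ℝ) (k : ℕ) : pk ε k = (ε + 1) * modeRate k + 1 := by
  rw [pk, modeRate]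
  ring

theorem rk_eq_modeRate (ε : ℝ) (k : ℕ) : rk ε k = ε * modeRate k ^ 2 + modeRate k := by
  rw [rk, modeRate]
  ring

theorem qk_eq_modeRate (ε : ℝ) (k : ℕ) : qk ε k = (9 * ε - 4 / 3) * modeRate k + 9 := by
  rw [qk, modeRate]
  ring

theorem turingRatio_modeRate_one : turingRatio (modeRate 1) = epsStar := by
  rw [turingRatio, modeRate, epsStar]
  congr 1 <;> push_cast <;> ring

theorem lt_modeRate_one : 39 < modeRate 1 := by
  calc (39 : ℝ) < 4 * 3.14 ^ 2 := by norm_num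
    _ < 4 * π ^ 2 := by gcongr; exact pi_gt_d2
    _ = modeRate 1 := by simp [modeRate]

theorem monotone_modeRate : Monotone modeRate := fun k l hkl ↦ by
  unfold modeRate
  gcongr

-- `turingRatio` is not antitone from `modeRate 1` on: it increases up to about `X = 58`.
theorem turingRatio_le_turingRatio (hX : 0 < X) (hXY : X ≤ Y)
    (h : 27 * (X + Y) + 243 ≤ X * Y) : turingRatio Y ≤ turingRatio X := by
  have hY : 0 < Y := hX.trans_le hXY
  rw [turingRatio, turingRatio, div_le_div_iff₀ (by positivity) (by positivity)]
  linarith [mul_nonneg (sub_nonneg.2 hXY) (sub_nonneg.2 h)]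

theorem turingRatio_modeRate_le_epsStar (hk : 1 ≤ k) : turingRatio (modeRate k) ≤ epsStar := by
  rw [← turingRatio_modeRate_one]
  have h1 := lt_modeRate_one
  obtain rfl | hk2 := hk.eq_or_lt
  · rfl
  have h2 : 4 * modeRate 1 ≤ modeRate k := by
    calc 4 * modeRate 1 = modeRate 2 := by
          rw [modeRate, modeRate]
          push_cast
          ring
      _ ≤ modeRate k := monotone_modeRate hk2
  have hprod : 39 * modeRate k ≤ modeRate 1 * modeRate k :=
    mul_le_mul_of_nonneg_right h1.le (by linarith)
  exact turingRatio_le_turingRatio (by linarith) (by linarith) (by linarith)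

theorem epsStar_pos : 0 < epsStar := by
  have h1 := lt_modeRate_one
  rw [← turingRatio_modeRate_one, turingRatio]
  exact div_pos (by linarith) (by positivity)

theorem abs_qk_lt_rk (hε : epsStar < ε) (hk : 1 ≤ k) : |qk ε k| < rk ε k := by
  have hX : 39 < modeRate k := lt_modeRate_one.trans_le (monotone_modeRate hk)
  have hratio : turingRatio (modeRate k) < ε := (turingRatio_modeRate_le_epsStar hk).trans_lt hε
  rw [turingRatio, div_lt_iff₀ (by positivity)] at hratio
  have hprod : 0 < ε * (modeRate k * (modeRate k - 9)) :=
    mul_pos (epsStar_pos.trans hε) (mul_pos (by linarith) (by linarith))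
  rw [abs_lt, qk_eq_modeRate, rk_eq_modeRate]
  constructor <;> linarith

theorem pk_nonneg (hε : 0 ≤ ε) (k : ℕ) : 0 ≤ pk ε k := by
  unfold pk
  positivity

theorem sk_sq_le (hε : 0 ≤ ε) (hk : 1 ≤ k) : sk ^ 2 ≤ pk ε k ^ 2 - 2 * rk ε k := by
  have hX : 39 < modeRate k := lt_modeRate_one.trans_le (monotone_modeRate hk)
  calc sk ^ 2 ≤ modeRate k ^ 2 := by
        rw [sk]
        gcongr
        linarith
    _ ≤ modeRate k ^ 2 + ((ε * modeRate k) ^ 2 + 2 * (ε * modeRate k) + 1) :=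
        le_add_of_nonneg_right (by positivity)
    _ = pk ε k ^ 2 - 2 * rk ε k := by
        rw [pk_eq_modeRate, rk_eq_modeRate]
        ring

theorem Dk_ne_zero_of_one_le {τ : ℝ} {z : ℂ} (hε : epsStar < ε) (hτ : 0 ≤ τ) (hk : 1 ≤ k)
    (hz : 0 ≤ z.re) : Dk ε τ k z ≠ 0 :=
  have hε0 : 0 ≤ ε := (epsStar_pos.trans hε).le
  delayQuadratic_ne_zero_of_abs_lt (pk_nonneg hε0 k) (abs_qk_lt_rk hε hk) (sk_sq_le hε0 hk) hτ hz

end Modes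

section ZerothMode

open Real ComplexConjugate

theorem omegaStar_sq : omegaStar ^ 2 = (520 + √296644) / 18 := by
  rw [omegaStar, sq_sqrt (by positivity)]

theorem omegaStar_sq_sq : (omegaStar ^ 2) ^ 2 = 520 / 9 * omegaStar ^ 2 + 81 := by
  rw [omegaStar_sq]
  linear_combination sq_sqrt (show (0 : ℝ) ≤ 296644 by norm_num) / 324

theorem omegaStar_sq_mem_Ioo : omegaStar ^ 2 ∈ Set.Ioo 59 60 := by
  have hlower : 544 < √296644 := lt_sqrt_of_sq_lt (by norm_num)
  have hupper : √296644 < 545 := (sqrt_lt' (by norm_num)).2 (by norm_num)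
  rw [omegaStar_sq]
  constructor <;> linarith

theorem omegaStar_mem_Ioo : omegaStar ∈ Set.Ioo (15 / 2) 8 := by
  have hnonneg : 0 ≤ omegaStar := sqrt_nonneg _
  obtain ⟨hlower, hupper⟩ := omegaStar_sq_mem_Ioo
  exact ⟨lt_of_pow_lt_pow_left₀ 2 hnonneg (by linarith),
    lt_of_pow_lt_pow_left₀ 2 (by norm_num) (by linarith)⟩

theorem im_sub_omegaStar_le {z : ℂ} (hx : 0 ≤ z.re) (hy : omegaStar ≤ z.im)
    (h : ‖z ^ 2 + z‖ ≤ ‖(23 / 3 : ℝ) * z + (9 : ℝ)‖) :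
    45 * (z.im - omegaStar) ≤ z.re - z.re ^ 2 := by
  obtain ⟨hW, -⟩ := omegaStar_sq_mem_Ioo
  obtain ⟨hω, -⟩ := omegaStar_mem_Ioo
  have hWsq := omegaStar_sq_sq
  have hsq := pow_le_pow_left₀ (norm_nonneg _) h 2
  have hleft : ‖z ^ 2 + z‖ ^ 2 =
      (z.re ^ 2 - z.im ^ 2 + z.re) ^ 2 + (2 * z.re * z.im + z.im) ^ 2 := by
    simpa using sq_norm_sq_add_mul_add 1 0 z
  rw [hleft, sq_norm_mul_add] at hsq
  have hyW : omegaStar ^ 2 ≤ z.im ^ 2 := pow_le_pow_left₀ (by linarith) hy 2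
  have hprod : 15 * (z.im - omegaStar) ≤ z.im ^ 2 - omegaStar ^ 2 := by
    rw [sq_sub_sq]
    exact mul_le_mul_of_nonneg_right (by linarith) (sub_nonneg.2 hy)
  generalize omegaStar ^ 2 = W at *
  generalize z.re = x at *
  have hfactor : (z.im ^ 2 - W) * (z.im ^ 2 + W - 520 / 9) + z.im ^ 2 * (2 * x ^ 2 + 2 * x) +
      (x ^ 2 + x) ^ 2 ≤ 529 / 9 * x ^ 2 + 138 * x := by
    linear_combination hsq - hWsq
  have hexcess : (z.im ^ 2 - W) * 60 ≤ (z.im ^ 2 - W) * (z.im ^ 2 + W - 520 / 9) :=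
    mul_le_mul_of_nonneg_left (by linarith) (by linarith)
  have hmixed : 59 * (2 * x ^ 2 + 2 * x) ≤ z.im ^ 2 * (2 * x ^ 2 + 2 * x) :=
    mul_le_mul_of_nonneg_right (by linarith) (by positivity)
  linarith [hfactor, hexcess, hmixed, hprod, sq_nonneg (x ^ 2 + x), sq_nonneg x]

/-- `T` is the critical delay `τ*`: the delay in `(0, 2π/ω*)` at which `i ω*` is a root of the
zeroth mode. -/
structure IsCriticalDelay (T : ℝ) : Prop where
  mem_Ioo : T ∈ Set.Ioo 0 (2 * π / omegaStar)
  root : delayQuadratic 1 0 (23 / 3) 9 T (Complex.I * omegaStar) = 0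

namespace IsCriticalDelay

variable {T τ : ℝ} {z : ℂ}

theorem omegaStar_mul_lt (hT : IsCriticalDelay T) : omegaStar * T < π / 2 - 1 / 50 := by
  obtain ⟨hW, -⟩ := omegaStar_sq_mem_Ioo
  have hω : 0 < omegaStar := by linarith [omegaStar_mem_Ioo.1]
  have hcos_eq := cos_mul_eq_of_delayQuadratic_I_mul_eq_zero hT.root
  have hsin_eq := sin_mul_eq_of_delayQuadratic_I_mul_eq_zero hT.root
  have hden : 0 < (9 : ℝ) ^ 2 + (23 / 3) ^ 2 * omegaStar ^ 2 := by positivity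
  have hcos : 1 / 50 < cos (omegaStar * T) := by
    refine lt_of_mul_lt_mul_right ?_ hden.le
    linarith
  have hsin : 0 < sin (omegaStar * T) := by
    refine pos_of_mul_pos_left ?_ hden.le
    rw [hsin_eq, sub_zero]
    positivity
  have hlt : omegaStar * T < 2 * π := by
    rw [mul_comm]
    exact (lt_div_iff₀ hω).1 hT.mem_Ioo.2
  linarith [lt_pi_div_two_sub_cos hlt (by linarith) hsin.le]

theorem lt_one (hT : IsCriticalDelay T) : T < 1 := by
  have hω := omegaStar_mem_Ioo.1
  refine lt_of_mul_lt_mul_left (a := omegaStar) ?_ (by linarith)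
  linarith [hT.omegaStar_mul_lt, pi_lt_four]

theorem delayAxisIm_omegaStar (hT : IsCriticalDelay T) :
    delayAxisIm 1 (23 / 3) 9 T omegaStar = 0 := by
  rw [← delayQuadratic_I_mul_im 1 0, hT.root, Complex.zero_im]

theorem im_mul_le_pi_div_two (hT : IsCriticalDelay T) (hx : 0 ≤ z.re)
    (h : ‖z ^ 2 + z‖ ≤ ‖(23 / 3 : ℝ) * z + (9 : ℝ)‖) : z.im * T ≤ π / 2 := by
  have hexcess : z.im - omegaStar ≤ 1 / 50 := by
    obtain hle | hle := le_total z.im omegaStar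
    · linarith
    · linarith [im_sub_omegaStar_le hx hle h, sq_nonneg (z.re - 1 / 2)]
  calc z.im * T = omegaStar * T + (z.im - omegaStar) * T := by ring
    _ ≤ omegaStar * T + 1 / 50 * 1 := by
        gcongr
        exacts [hT.mem_Ioo.1.le, hT.lt_one.le]
    _ ≤ π / 2 := by linarith [hT.omegaStar_mul_lt]

theorem re_mul_im_add_delayAxisIm_nonneg (hT : IsCriticalDelay T) (hx : 0 ≤ z.re)
    (hy : 0 < z.im) (h : ‖z ^ 2 + z‖ ≤ ‖(23 / 3 : ℝ) * z + (9 : ℝ)‖) :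
    0 ≤ z.re * z.im + delayAxisIm 1 (23 / 3) 9 T z.im := by
  have hT0 : 0 ≤ T := hT.mem_Ioo.1.le
  have hT1 := hT.lt_one
  have hωT := hT.omegaStar_mul_lt
  obtain ⟨hω, hω'⟩ := omegaStar_mem_Ioo
  obtain hle | hle := le_total z.im omegaStar
  · exact add_nonneg (mul_nonneg hx hy.le) (delayAxisIm_nonneg_of_le_root (by norm_num) hT0
      (by linarith) (by linarith) hT.delayAxisIm_omegaStar hy.le hle)
  have hlower := delayAxisIm_sub_le (p := 1) (s := 23 / 3) (q := 9) (by norm_num) (by norm_num)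
    (by norm_num) hT0 (by linarith) hle (hT.im_mul_le_pi_div_two hx h)
  have hloss : (omegaStar * (23 / 3) + 9) * (T * (z.im - omegaStar)) ≤ z.re * z.im :=
    calc (omegaStar * (23 / 3) + 9) * (T * (z.im - omegaStar))
        ≤ (8 * (23 / 3) + 9) * (1 * (z.im - omegaStar)) := by gcongr
      _ ≤ z.re * (15 / 2) := by linarith [im_sub_omegaStar_le hx hle h, sq_nonneg z.re]
      _ ≤ z.re * z.im := mul_le_mul_of_nonneg_left (hω.le.trans hle) hx
  linarith [hT.delayAxisIm_omegaStar]

theorem delayQuadratic_ne_zero_of_im_pos (hT : IsCriticalDelay T) (hτ : 0 ≤ τ) (hτT : τ < T)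
    (hx : 0 ≤ z.re) (hy : 0 < z.im) : delayQuadratic 1 0 (23 / 3) 9 τ z ≠ 0 := by
  intro hroot
  have hnorm : ‖z ^ 2 + z‖ ≤ ‖(23 / 3 : ℝ) * z + (9 : ℝ)‖ := by
    simpa using norm_sq_add_mul_add_le_of_delayQuadratic_eq_zero hτ hx hroot
  have hyT : z.im * T ≤ π / 2 := hT.im_mul_le_pi_div_two hx hnorm
  have hcos : 0 ≤ cos (z.im * τ) := cos_nonneg_of_neg_pi_div_two_le_of_le
    (by linarith [pi_pos, mul_nonneg hy.le hτ])
    ((mul_le_mul_of_nonneg_left hτT.le hy.le).trans hyT)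
  have hpos : 0 < z.re * z.im + delayAxisIm 1 (23 / 3) 9 τ z.im :=
    (hT.re_mul_im_add_delayAxisIm_nonneg hx hy hnorm).trans_lt (add_lt_add_right
      (delayAxisIm_lt_delayAxisIm_of_lt 1 (by norm_num) (by norm_num) hy hτ hτT hyT) _)
  exact delayQuadratic_ne_zero_of_delayAxisIm_pos zero_le_one (by norm_num) (by norm_num) hτ hx hy
    hcos hpos hroot

theorem delayQuadratic_ne_zero (hT : IsCriticalDelay T) (hτ : 0 ≤ τ) (hτT : τ < T)
    (hx : 0 ≤ z.re) : delayQuadratic 1 0 (23 / 3) 9 τ z ≠ 0 := by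
  obtain hneg | hzero | hpos := lt_trichotomy z.im 0
  · have hconj : delayQuadratic 1 0 (23 / 3) 9 τ (conj z) ≠ 0 :=
      hT.delayQuadratic_ne_zero_of_im_pos hτ hτT (by simpa using hx) (by simpa using hneg)
    rwa [delayQuadratic_conj, map_ne_zero] at hconj
  · exact delayQuadratic_ne_zero_of_im_eq_zero zero_le_one le_rfl (by norm_num) (by norm_num) hx
      hzero
  · exact hT.delayQuadratic_ne_zero_of_im_pos hτ hτT hx hpos

end IsCriticalDelay

end ZerothMode

/-- For every `ε > ε*` and every `τ` with `0 ≤ τ < τ*` (where `τ*` is the unique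
`τ ∈ (0, 2π/ω*)` with `D_0(iω*; τ) = 0`), every `k ∈ ℕ₀` and every `λ ∈ ℂ` with
`D_k(λ; τ, ε) = 0` satisfies `Re λ < 0`; i.e., the constant steady state `(3, 2/9)` is
linearly asymptotically stable for `τ ∈ [0, τ*)` and `ε > ε*`. -/
theorem linear_stability_region (τs : ℝ)
    (hmem : τs ∈ Set.Ioo 0 (2 * Real.pi / omegaStar))
    (hτs : D0 τs (Complex.I * (omegaStar : ℂ)) = 0)
    (ε : ℝ) (hε : epsStar < ε) (τ : ℝ) (hτ0 : 0 ≤ τ) (hττ : τ < τs) :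
    ∀ k : ℕ, ∀ z : ℂ, Dk ε τ k z = 0 → z.re < 0 := by
  intro k z hroot
  have hT : IsCriticalDelay τs := ⟨hmem, D0_eq_delayQuadratic τs _ ▸ hτs⟩
  by_contra! hz
  obtain rfl | hk := k.eq_zero_or_pos
  · rw [Dk_zero_eq_delayQuadratic] at hroot
    exact hT.delayQuadratic_ne_zero hτ0 hττ hz hroot
  · exact Dk_ne_zero_of_one_le hε hτ0 hk hz hroot
end

section
/- There exist δ > 0 and a differentiable function γ : (ε* − δ, ε* + δ) → ℝ such that γ(ε*) = 0, D_1(γ(ε); τ*, ε) = 0 for all ε in this interval, and γ'(ε*) = −(16π⁴ + 36π²)/(p_1(ε*) + s_1 − τ* q_1(ε*)) < 0; i.e., the simple zero characteristic root of the first mode crosses zero transversally (with negative speed) as ε increases through ε*. -/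
/-!
Setting `λ = 0` removes the delay from `D_k`: `D_k(0; τ, ε) = r_k(ε) + q_k(ε)` is affine in `ε`, and
`ε_k` is its zero. The implicit function theorem continues the root `λ = 0` along `ε` with speed
`-∂_ε D_k / ∂_λ D_k`, where `∂_λ D_k(0) = p_k + s_k - τ q_k`. At `ε_k > 0` one has
`q_k = -r_k < 0`, so this denominator is positive for every delay `τ ≥ 0`.
-/

open scoped ContDiff Topology

theorem exists_hasDerivAt_implicitFunction {𝕜 : Type*} [RCLike 𝕜] {n : ℕ∞ω} {f : 𝕜 × 𝕜 → 𝕜}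
    {a b fx fy : 𝕜} (hf : ContDiffAt 𝕜 n f (a, b)) (hn : n ≠ 0)
    (hfx : HasDerivAt (fun x => f (x, b)) fx a) (hfy : HasDerivAt (fun y => f (a, y)) fy b)
    (hfy_ne : fy ≠ 0) :
    ∃ γ : 𝕜 → 𝕜, γ a = b ∧ ContDiffAt 𝕜 n γ a ∧ (∀ᶠ x in 𝓝 a, f (x, γ x) = f (a, b)) ∧
      HasDerivAt γ (-fx / fy) a := by
  have hdf : HasFDerivAt f (fderiv 𝕜 f (a, b)) (a, b) := (hf.differentiableAt hn).hasFDerivAt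
  have hinl : fderiv 𝕜 f (a, b) (1, 0) = fx :=
    (hdf.comp_hasDerivAt a ((hasDerivAt_id a).prodMk (hasDerivAt_const a b))).unique hfx
  have hinr : fderiv 𝕜 f (a, b) (0, 1) = fy :=
    (hdf.comp_hasDerivAt b ((hasDerivAt_const b a).prodMk (hasDerivAt_id b))).unique hfy
  have hpartial : fderiv 𝕜 f (a, b) ∘L .inr 𝕜 𝕜 𝕜 =
      (ContinuousLinearEquiv.unitsEquivAut 𝕜 (Units.mk0 fy hfy_ne) : 𝕜 →L[𝕜] 𝕜) := by
    ext
    simp [hinr]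
  have hinv : (fderiv 𝕜 f (a, b) ∘L .inr 𝕜 𝕜 𝕜).IsInvertible := ⟨_, hpartial.symm⟩
  refine ⟨hf.implicitFunction hn hinv, hf.implicitFunction_apply_self hn hinv,
    hf.contDiffAt_implicitFunction hn hinv, hf.eventually_apply_implicitFunction hn hinv, ?_⟩
  convert! (hf.hasStrictFDerivAt_implicitFunction hn hinv).hasFDerivAt.hasDerivAt using 1
  simp [hpartial, ContinuousLinearMap.inverse_equiv, hinl, div_eq_mul_inv]

/-- The restriction of `D_k(·; τ, ·)` to real `λ`, as a function of the pair `(ε, λ)`. -/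
noncomputable def realDk (τ : ℝ) (k : ℕ) (v : ℝ × ℝ) : ℝ :=
  v.2 ^ 2 + pk v.1 k * v.2 + rk v.1 k + (sk * v.2 + qk v.1 k) * Real.exp (-v.2 * τ)

/-- The slope `∂_ε D_k(0; τ, ε) = ∂_ε (r_k + q_k)`, which does not depend on `ε` or `τ`. -/
noncomputable def epsSlope (k : ℕ) : ℝ :=
  16 * (k : ℝ) ^ 4 * Real.pi ^ 4 + 36 * (k : ℝ) ^ 2 * Real.pi ^ 2

/-- The critical diffusion ratio `ε_k` at which `0` is a characteristic root of the `k`-th mode;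
the `ε*` of the theorem is `ε_1`. At `k = 0` the value `0` comes from division by zero. -/
noncomputable def critRatio (k : ℕ) : ℝ :=
  (4 * (k : ℝ) ^ 2 * Real.pi ^ 2 / 3 - 9) / epsSlope k

theorem critRatio_one : critRatio 1 = epsStar := by
  simp [critRatio, epsSlope, epsStar]

theorem epsSlope_pos {k : ℕ} (hk : k ≠ 0) : 0 < epsSlope k := by
  unfold epsSlope
  positivity

theorem critRatio_pos {k : ℕ} (hk : k ≠ 0) : 0 < critRatio k := by
  have hk_one : (1 : ℝ) ≤ (k : ℝ) ^ 2 := one_le_pow₀ (mod_cast Nat.one_le_iff_ne_zero.mpr hk)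
  have hpi : (9 : ℝ) < Real.pi ^ 2 := by nlinarith [Real.pi_gt_three]
  exact div_pos (by nlinarith) (epsSlope_pos hk)

theorem rk_add_qk (ε : ℝ) (k : ℕ) :
    rk ε k + qk ε k = epsSlope k * ε - (4 * (k : ℝ) ^ 2 * Real.pi ^ 2 / 3 - 9) := by
  unfold rk qk epsSlope
  ring

theorem rk_add_qk_critRatio {k : ℕ} (hk : k ≠ 0) : rk (critRatio k) k + qk (critRatio k) k = 0 := by
  rw [rk_add_qk, critRatio, mul_div_cancel₀ _ (epsSlope_pos hk).ne', sub_self]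

theorem pk_pos {ε : ℝ} (hε : 0 ≤ ε) (k : ℕ) : 0 < pk ε k := by
  unfold pk
  positivity

theorem rk_nonneg {ε : ℝ} (hε : 0 ≤ ε) (k : ℕ) : 0 ≤ rk ε k := by
  unfold rk
  positivity

theorem pk_add_sk_sub_mul_qk_pos {τ ε : ℝ} {k : ℕ} (hτ : 0 ≤ τ) (hε : 0 ≤ ε)
    (hroot : rk ε k + qk ε k = 0) : 0 < pk ε k + sk - τ * qk ε k := by
  have hsk : 0 < sk := by norm_num [sk]
  have hqk : qk ε k ≤ 0 := by linarith [rk_nonneg hε k]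
  linarith [pk_pos hε k, mul_nonpos_of_nonneg_of_nonpos hτ hqk]

theorem Dk_ofReal (ε τ : ℝ) (k : ℕ) (x : ℝ) : Dk ε τ k x = ((realDk τ k (ε, x) : ℝ) : ℂ) := by
  simp [Dk, realDk]

theorem contDiff_realDk {n : ℕ∞ω} (τ : ℝ) (k : ℕ) : ContDiff ℝ n (realDk τ k) := by
  unfold realDk pk rk qk
  fun_prop

theorem realDk_zero (τ ε : ℝ) (k : ℕ) : realDk τ k (ε, 0) = rk ε k + qk ε k := by
  simp [realDk]

theorem hasDerivAt_realDk_eps (τ ε : ℝ) (k : ℕ) :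
    HasDerivAt (fun ε => realDk τ k (ε, 0)) (epsSlope k) ε := by
  simp only [realDk_zero, rk_add_qk]
  simpa using ((hasDerivAt_id ε).const_mul (epsSlope k)).sub_const
    (4 * (k : ℝ) ^ 2 * Real.pi ^ 2 / 3 - 9)

theorem hasDerivAt_realDk_root (τ ε : ℝ) (k : ℕ) :
    HasDerivAt (fun x => realDk τ k (ε, x)) (pk ε k + sk - τ * qk ε k) 0 := by
  have hquad : HasDerivAt (fun x : ℝ => x ^ 2 + pk ε k * x + rk ε k) (pk ε k) 0 := by
    simpa using ((hasDerivAt_pow 2 (0 : ℝ)).add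
      ((hasDerivAt_id (0 : ℝ)).const_mul (pk ε k))).add_const (rk ε k)
  have hlin : HasDerivAt (fun x : ℝ => sk * x + qk ε k) sk 0 := by
    simpa using ((hasDerivAt_id (0 : ℝ)).const_mul sk).add_const (qk ε k)
  have hexp : HasDerivAt (fun x : ℝ => Real.exp (-x * τ)) (-τ) 0 := by
    simpa using ((hasDerivAt_neg (0 : ℝ)).mul_const τ).exp
  convert! hquad.add (hlin.mul hexp) using 1
  simp only [neg_zero, zero_mul, Real.exp_zero, mul_one, mul_zero, zero_add, mul_neg]
  ring

theorem exists_hasDerivAt_root_branch {τ ε₀ : ℝ} {k : ℕ} (hroot : rk ε₀ k + qk ε₀ k = 0)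
    (hsimple : pk ε₀ k + sk - τ * qk ε₀ k ≠ 0) :
    ∃ γ : ℝ → ℝ, γ ε₀ = 0 ∧ (∀ᶠ ε in 𝓝 ε₀, DifferentiableAt ℝ γ ε) ∧
      (∀ᶠ ε in 𝓝 ε₀, Dk ε τ k (γ ε : ℝ) = 0) ∧
      HasDerivAt γ (-epsSlope k / (pk ε₀ k + sk - τ * qk ε₀ k)) ε₀ := by
  obtain ⟨γ, hγ_zero, hγ_smooth, hγ_root, hγ_deriv⟩ :=
    exists_hasDerivAt_implicitFunction (contDiff_realDk τ k).contDiffAt one_ne_zero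
      (hasDerivAt_realDk_eps τ ε₀ k) (hasDerivAt_realDk_root τ ε₀ k) hsimple
  refine ⟨γ, hγ_zero, ?_, ?_, hγ_deriv⟩
  · filter_upwards [hγ_smooth.eventually (by simp)] with ε hε
    exact hε.differentiableAt one_ne_zero
  · filter_upwards [hγ_root] with ε hε
    rw [Dk_ofReal, hε, realDk_zero, hroot, Complex.ofReal_zero]

theorem turing_transversality_general {τ : ℝ} (hτ : 0 ≤ τ) {k : ℕ} (hk : k ≠ 0) :
    ∃ δ : ℝ, 0 < δ ∧ ∃ γ : ℝ → ℝ,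
      γ (critRatio k) = 0 ∧
      (∀ ε ∈ Set.Ioo (critRatio k - δ) (critRatio k + δ), DifferentiableAt ℝ γ ε) ∧
      (∀ ε ∈ Set.Ioo (critRatio k - δ) (critRatio k + δ), Dk ε τ k ((γ ε : ℝ) : ℂ) = 0) ∧
      HasDerivAt γ
        (-epsSlope k / (pk (critRatio k) k + sk - τ * qk (critRatio k) k)) (critRatio k) ∧
      -epsSlope k / (pk (critRatio k) k + sk - τ * qk (critRatio k) k) < 0 := by
  have hroot := rk_add_qk_critRatio hk
  have hsimple := pk_add_sk_sub_mul_qk_pos hτ (critRatio_pos hk).le hroot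
  obtain ⟨γ, hγ_zero, hγ_diff, hγ_root, hγ_deriv⟩ :=
    exists_hasDerivAt_root_branch hroot hsimple.ne'
  obtain ⟨δ, hδ, hball⟩ := Metric.eventually_nhds_iff_ball.mp (hγ_diff.and hγ_root)
  rw [Real.ball_eq_Ioo] at hball
  exact ⟨δ, hδ, γ, hγ_zero, fun ε hε => (hball ε hε).1, fun ε hε => (hball ε hε).2, hγ_deriv,
    div_neg_of_neg_of_pos (neg_lt_zero.mpr (epsSlope_pos hk)) hsimple⟩

/-- There exist `δ > 0` and a differentiable function `γ : (ε* - δ, ε* + δ) → ℝ` with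
`γ(ε*) = 0`, `D_1(γ(ε); τ*, ε) = 0` on this interval, and
`γ'(ε*) = -(16π⁴ + 36π²)/(p₁(ε*) + s₁ - τ* q₁(ε*)) < 0`; i.e., the simple zero
characteristic root of the first mode crosses zero transversally (with negative speed)
as `ε` increases through `ε*`. -/
theorem turing_transversality (τs : ℝ)
    (hmem : τs ∈ Set.Ioo 0 (2 * Real.pi / omegaStar))
    (hτs : D0 τs (Complex.I * (omegaStar : ℂ)) = 0) :
    ∃ δ : ℝ, 0 < δ ∧ ∃ γ : ℝ → ℝ,
      γ epsStar = 0 ∧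
      (∀ ε ∈ Set.Ioo (epsStar - δ) (epsStar + δ), DifferentiableAt ℝ γ ε) ∧
      (∀ ε ∈ Set.Ioo (epsStar - δ) (epsStar + δ), Dk ε τs 1 ((γ ε : ℝ) : ℂ) = 0) ∧
      HasDerivAt γ
        (-(16 * Real.pi ^ 4 + 36 * Real.pi ^ 2) /
          (pk epsStar 1 + sk - τs * qk epsStar 1)) epsStar ∧
      -(16 * Real.pi ^ 4 + 36 * Real.pi ^ 2) /
          (pk epsStar 1 + sk - τs * qk epsStar 1) < 0 := by
  simpa only [critRatio_one, epsSlope, Nat.cast_one, one_pow, mul_one] using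
    turing_transversality_general hmem.1.le one_ne_zero
end

section
/- There exist δ > 0 and a continuously differentiable function λ : (τ* − δ, τ* + δ) → ℂ such that λ(τ*) = iω*, D_0(λ(τ); τ) = 0 for all τ in this interval, and Re λ'(τ*) > 0; i.e., the simple purely imaginary characteristic roots of the zeroth mode cross the imaginary axis transversally from left to right as the delay τ increases through τ*. -/
/-!
Near a root `z₀ ≠ 0` of `P z + Q z * exp (-z * τ)`, the equation can be solved explicitly for the
delay as a function of the root: `τ = -log (-P z / Q z) / z` for a suitable branch of the logarithm.
The root branch `λ` is the local inverse of this function, so at the critical delay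
`1 / λ' = (Q' / Q - P' / P - τ) / z₀`. For `z₀ = iω` the term in `τ` is purely imaginary, so the
sign of `Re λ'` does not depend on the delay. Since `|P| = |Q|` at `z₀`, it is the sign of the
derivative of `|P(iω)| ^ 2 - |Q(iω)| ^ 2` with respect to `ω ^ 2`, which for quadratic `P` and
affine `Q` is a polynomial in `ω ^ 2`.
-/

open Complex
open scoped Topology

theorem exists_analyticAt_rightInverse {𝕜 : Type*} [NontriviallyNormedField 𝕜] [CompleteSpace 𝕜]
    [CharZero 𝕜] {f : 𝕜 → 𝕜} {a : 𝕜} (hf : AnalyticAt 𝕜 f a) (hf' : deriv f a ≠ 0) :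
    ∃ g : 𝕜 → 𝕜, AnalyticAt 𝕜 g (f a) ∧ g (f a) = a ∧ (∀ᶠ y in 𝓝 (f a), f (g y) = y) ∧
      deriv g (f a) = (deriv f a)⁻¹ :=
  ⟨hf.hasStrictDerivAt.localInverse _ _ _ hf', hf.analyticAt_localInverse hf',
    HasStrictFDerivAt.localInverse_apply_image .., hf.hasStrictDerivAt.eventually_right_inverse hf',
    (hf.hasStrictDerivAt.to_localInverse hf').hasDerivAt.deriv⟩

theorem exists_Ioo_hasDerivAt_comp_ofReal {g : ℂ → ℂ} {t₀ : ℝ} {p : ℂ → Prop}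
    (hg : AnalyticAt ℂ g t₀) (hp : ∀ᶠ w in 𝓝 (t₀ : ℂ), p w) :
    ∃ δ > 0, (∀ t ∈ Set.Ioo (t₀ - δ) (t₀ + δ), HasDerivAt (fun t : ℝ ↦ g t) (deriv g t) t) ∧
      ContinuousOn (fun t : ℝ ↦ deriv g t) (Set.Ioo (t₀ - δ) (t₀ + δ)) ∧
      ∀ t ∈ Set.Ioo (t₀ - δ) (t₀ + δ), p t := by
  have hnear : ∀ᶠ t : ℝ in 𝓝 t₀, AnalyticAt ℂ g t ∧ p t :=
    continuous_ofReal.continuousAt.eventually (hg.eventually_analyticAt.and hp)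
  obtain ⟨δ, hδ, hball⟩ := Metric.eventually_nhds_iff_ball.mp hnear
  rw [Real.ball_eq_Ioo] at hball
  refine ⟨δ, hδ, fun t ht ↦ ?_, fun t ht ↦ ?_, fun t ht ↦ (hball t ht).2⟩
  · exact (hball t ht).1.differentiableAt.hasDerivAt.comp_ofReal
  · exact ((hball t ht).1.deriv.continuousAt.comp
      continuous_ofReal.continuousAt).continuousWithinAt

/-- The characteristic function of a linear equation with a single discrete delay `τ`: `P` collects
the instantaneous terms and `Q` the delayed ones. The delay is complex, so that root branches can be
obtained as holomorphic functions of it. -/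
noncomputable def delayCharFun (P Q : ℂ → ℂ) (τ z : ℂ) : ℂ :=
  P z + Q z * exp (-z * τ)

/-- The delay for which `z` near `z₀` is a root of `delayCharFun P Q`, on the branch of the
logarithm that gives the delay `τ₀` at `z₀`. -/
noncomputable def delayOfRoot (P Q : ℂ → ℂ) (τ₀ z₀ z : ℂ) : ℂ :=
  (τ₀ * z₀ - log (P z / Q z / (P z₀ / Q z₀))) / z

section RootBranch

variable {P Q : ℂ → ℂ} {τ₀ z₀ : ℂ}

theorem left_ne_zero_of_delayCharFun_eq_zero (hQ : Q z₀ ≠ 0) (hroot : delayCharFun P Q τ₀ z₀ = 0) :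
    P z₀ ≠ 0 := by
  intro hP
  simp [delayCharFun, hP, hQ] at hroot

theorem delayOfRoot_self (hz : z₀ ≠ 0) (hP : P z₀ ≠ 0) (hQ : Q z₀ ≠ 0) :
    delayOfRoot P Q τ₀ z₀ z₀ = τ₀ := by
  simp [delayOfRoot, div_self (div_ne_zero hP hQ), hz]

theorem delayCharFun_delayOfRoot {z : ℂ} (hz : z ≠ 0) (hPz : P z ≠ 0) (hQz : Q z ≠ 0)
    (hP : P z₀ ≠ 0) (hQ : Q z₀ ≠ 0) (hroot : delayCharFun P Q τ₀ z₀ = 0) :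
    delayCharFun P Q (delayOfRoot P Q τ₀ z₀ z) z = 0 := by
  have hexponent : -z * delayOfRoot P Q τ₀ z₀ z =
      log (P z / Q z / (P z₀ / Q z₀)) + -z₀ * τ₀ := by
    rw [delayOfRoot]
    field_simp
    ring
  have hratio : P z / Q z / (P z₀ / Q z₀) ≠ 0 :=
    div_ne_zero (div_ne_zero hPz hQz) (div_ne_zero hP hQ)
  have hexp : Q z₀ * exp (-z₀ * τ₀) = -P z₀ := eq_neg_of_add_eq_zero_right hroot
  calc P z + Q z * exp (-z * delayOfRoot P Q τ₀ z₀ z)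
      = P z + P z / P z₀ * (Q z₀ * exp (-z₀ * τ₀)) := by
        rw [hexponent, exp_add, exp_log hratio]
        field_simp
    _ = 0 := by
        rw [hexp]
        field_simp
        ring

theorem analyticAt_delayOfRoot (hPa : AnalyticAt ℂ P z₀) (hQa : AnalyticAt ℂ Q z₀) (hz : z₀ ≠ 0)
    (hP : P z₀ ≠ 0) (hQ : Q z₀ ≠ 0) : AnalyticAt ℂ (delayOfRoot P Q τ₀ z₀) z₀ := by
  have hslit : P z₀ / Q z₀ / (P z₀ / Q z₀) ∈ slitPlane := by
    simp [div_self (div_ne_zero hP hQ)]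
  exact (analyticAt_const.sub (((hPa.div hQa hQ).div_const).clog hslit)).div analyticAt_id hz

theorem deriv_delayOfRoot_self (hPd : DifferentiableAt ℂ P z₀) (hQd : DifferentiableAt ℂ Q z₀)
    (hz : z₀ ≠ 0) (hP : P z₀ ≠ 0) (hQ : Q z₀ ≠ 0) :
    deriv (delayOfRoot P Q τ₀ z₀) z₀ = (logDeriv Q z₀ - logDeriv P z₀ - τ₀) / z₀ := by
  have hslit : P z₀ / Q z₀ / (P z₀ / Q z₀) ∈ slitPlane := by
    simp [div_self (div_ne_zero hP hQ)]
  have hlog := (((hPd.hasDerivAt.fun_div hQd.hasDerivAt hQ).div_const (P z₀ / Q z₀)).clog hslit)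
  have hderiv := (hlog.const_sub (τ₀ * z₀)).fun_div (hasDerivAt_id' z₀) hz
  refine hderiv.deriv.trans ?_
  rw [div_self (div_ne_zero hP hQ), log_one, logDeriv_apply, logDeriv_apply]
  field_simp
  ring

theorem exists_analyticAt_delayCharFun_eq_zero (hPa : AnalyticAt ℂ P z₀) (hQa : AnalyticAt ℂ Q z₀)
    (hz : z₀ ≠ 0) (hQ : Q z₀ ≠ 0) (hroot : delayCharFun P Q τ₀ z₀ = 0)
    (hsimple : logDeriv Q z₀ - logDeriv P z₀ - τ₀ ≠ 0) :
    ∃ g : ℂ → ℂ, AnalyticAt ℂ g τ₀ ∧ g τ₀ = z₀ ∧ (∀ᶠ τ in 𝓝 τ₀, delayCharFun P Q τ (g τ) = 0) ∧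
      deriv g τ₀ = z₀ / (logDeriv Q z₀ - logDeriv P z₀ - τ₀) := by
  have hP := left_ne_zero_of_delayCharFun_eq_zero hQ hroot
  have hderiv : deriv (delayOfRoot P Q τ₀ z₀) z₀ = (logDeriv Q z₀ - logDeriv P z₀ - τ₀) / z₀ :=
    deriv_delayOfRoot_self hPa.differentiableAt hQa.differentiableAt hz hP hQ
  obtain ⟨g, hga, hg₀, hinv, hg'⟩ := exists_analyticAt_rightInverse
    (analyticAt_delayOfRoot (τ₀ := τ₀) hPa hQa hz hP hQ) (hderiv ▸ div_ne_zero hsimple hz)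
  rw [delayOfRoot_self hz hP hQ] at hga hg₀ hinv hg'
  refine ⟨g, hga, hg₀, ?_, by rw [hg', hderiv, inv_div]⟩
  have hne : ∀ᶠ z in 𝓝 (g τ₀), z ≠ 0 ∧ P z ≠ 0 ∧ Q z ≠ 0 := by
    rw [hg₀]
    exact (continuousAt_id.eventually_ne hz).and
      ((hPa.continuousAt.eventually_ne hP).and (hQa.continuousAt.eventually_ne hQ))
  filter_upwards [hinv, hga.continuousAt.eventually hne] with τ hτ ⟨hgτ, hPτ, hQτ⟩
  simpa only [hτ] using delayCharFun_delayOfRoot hgτ hPτ hQτ hP hQ hroot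

end RootBranch

theorem norm_eq_norm_of_delayCharFun_I_mul_eq_zero {P Q : ℂ → ℂ} {τ ω : ℝ}
    (hroot : delayCharFun P Q τ (I * ω) = 0) : ‖P (I * ω)‖ = ‖Q (I * ω)‖ := by
  have hexp : ‖exp (-(I * ω) * τ)‖ = 1 := by simp [norm_exp]
  rw [eq_neg_of_add_eq_zero_left hroot, norm_neg, norm_mul, hexp, mul_one]

theorem re_I_mul_div (ω : ℝ) (w : ℂ) : (I * ω / w).re = ω * w.im / normSq w := by
  simp [div_re]

theorem im_logDeriv_quadratic (p r ω : ℝ) :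
    (logDeriv (fun z : ℂ ↦ z ^ 2 + p * z + r) (I * ω)).im =
      ω * (2 * r - 2 * ω ^ 2 - p ^ 2) / normSq ((I * ω) ^ 2 + p * (I * ω) + r) := by
  have hderiv : HasDerivAt (fun z : ℂ ↦ z ^ 2 + p * z + r) (2 * (I * ω) + p) (I * ω) := by
    simpa using ((hasDerivAt_pow 2 (I * ω : ℂ)).add
      ((hasDerivAt_id' (I * ω : ℂ)).const_mul (p : ℂ))).add_const (r : ℂ)
  rw [logDeriv_apply, hderiv.deriv, div_im, ← sub_div]
  simp only [add_im, mul_im, re_ofNat, I_re, ofReal_im, mul_zero, I_im, ofReal_re, one_mul,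
    zero_add, im_ofNat, mul_re, zero_mul, sub_self, add_zero, pow_two, add_re, zero_sub]
  ring

theorem im_logDeriv_affine (s q ω : ℝ) :
    (logDeriv (fun z : ℂ ↦ s * z + q) (I * ω)).im =
      -(ω * s ^ 2) / normSq (s * (I * ω) + q) := by
  have hderiv : HasDerivAt (fun z : ℂ ↦ s * z + q) s (I * ω) := by
    simpa using ((hasDerivAt_id' (I * ω : ℂ)).const_mul (s : ℂ)).add_const (q : ℂ)
  rw [logDeriv_apply, hderiv.deriv, div_im, ← sub_div]
  simp only [ofReal_im, add_re, mul_re, ofReal_re, I_re, zero_mul, I_im, mul_zero, sub_self,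
    mul_im, one_mul, zero_add, add_im, add_zero, zero_sub]
  ring

section SecondOrder

variable {p r s q ω τ₀ : ℝ}

theorem affine_ne_zero_of_crossing (hω : ω ≠ 0)
    (hcross : s ^ 2 + 2 * r < p ^ 2 + 2 * ω ^ 2)
    (hroot : delayCharFun (fun z ↦ z ^ 2 + p * z + r) (fun z ↦ s * z + q) τ₀ (I * ω) = 0) :
    s * (I * ω) + q ≠ 0 := by
  intro hQ
  have hP : (I * ω) ^ 2 + p * (I * ω) + r = 0 := by simpa [delayCharFun, hQ] using hroot
  have hs : s = 0 := by simpa [hω] using congrArg im hQ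
  have hp : p = 0 := by simpa [pow_two, hω] using congrArg im hP
  have hr : -(ω * ω) + r = 0 := by simpa [pow_two] using congrArg re hP
  subst hs hp
  linarith

theorem im_logDeriv_sub_pos_of_crossing (hω : ω ≠ 0)
    (hcross : s ^ 2 + 2 * r < p ^ 2 + 2 * ω ^ 2)
    (hroot : delayCharFun (fun z ↦ z ^ 2 + p * z + r) (fun z ↦ s * z + q) τ₀ (I * ω) = 0) :
    0 < ω * (logDeriv (fun z : ℂ ↦ s * z + q) (I * ω) -
      logDeriv (fun z : ℂ ↦ z ^ 2 + p * z + r) (I * ω)).im := by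
  have hnorm : normSq ((I * ω) ^ 2 + p * (I * ω) + r) = normSq (s * (I * ω) + q) := by
    simp only [normSq_eq_norm_sq, norm_eq_norm_of_delayCharFun_I_mul_eq_zero hroot]
  have hpos : 0 < normSq (s * (I * ω) + q) :=
    normSq_pos.mpr (affine_ne_zero_of_crossing hω hcross hroot)
  calc 0 < ω ^ 2 * (p ^ 2 + 2 * ω ^ 2 - (s ^ 2 + 2 * r)) / normSq (s * (I * ω) + q) :=
        div_pos (mul_pos (by positivity) (sub_pos.mpr hcross)) hpos
    _ = _ := by rw [sub_im, im_logDeriv_affine, im_logDeriv_quadratic, hnorm]; ring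

theorem hopf_transversality_general (hω : ω ≠ 0)
    (hcross : s ^ 2 + 2 * r < p ^ 2 + 2 * ω ^ 2)
    (hroot : delayCharFun (fun z ↦ z ^ 2 + p * z + r) (fun z ↦ s * z + q) τ₀ (I * ω) = 0) :
    ∃ δ : ℝ, 0 < δ ∧ ∃ lam lam' : ℝ → ℂ,
      lam τ₀ = I * ω ∧
      (∀ τ ∈ Set.Ioo (τ₀ - δ) (τ₀ + δ), HasDerivAt lam (lam' τ) τ) ∧
      ContinuousOn lam' (Set.Ioo (τ₀ - δ) (τ₀ + δ)) ∧
      (∀ τ ∈ Set.Ioo (τ₀ - δ) (τ₀ + δ),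
        delayCharFun (fun z ↦ z ^ 2 + p * z + r) (fun z ↦ s * z + q) τ (lam τ) = 0) ∧
      0 < (lam' τ₀).re := by
  have him := im_logDeriv_sub_pos_of_crossing hω hcross hroot
  set w : ℂ := logDeriv (fun z : ℂ ↦ s * z + q) (I * ω) -
    logDeriv (fun z : ℂ ↦ z ^ 2 + p * z + r) (I * ω) - τ₀ with hw
  have hw_im : 0 < ω * w.im := by simpa [hw] using him
  have hw_ne : w ≠ 0 := fun h ↦ by simp [h] at hw_im
  obtain ⟨g, hga, hg₀, hzero, hg'⟩ := exists_analyticAt_delayCharFun_eq_zero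
    (P := fun z ↦ z ^ 2 + p * z + r) (Q := fun z ↦ s * z + q) (by fun_prop) (by fun_prop)
    (by simp [hω]) (affine_ne_zero_of_crossing hω hcross hroot) hroot hw_ne
  obtain ⟨δ, hδ, hderiv, hcont, hzero'⟩ := exists_Ioo_hasDerivAt_comp_ofReal hga hzero
  refine ⟨δ, hδ, fun τ ↦ g τ, fun τ ↦ deriv g τ, hg₀, hderiv, hcont, hzero', ?_⟩
  calc 0 < ω * w.im / normSq w := div_pos hw_im (normSq_pos.mpr hw_ne)
    _ = (deriv g τ₀).re := by rw [hg', ← hw, re_I_mul_div]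

end SecondOrder

theorem D0_eq_delayCharFun (τ : ℝ) (z : ℂ) :
    D0 τ z = delayCharFun (fun z ↦ z ^ 2 + (1 : ℝ) * z + (0 : ℝ))
      (fun z ↦ (23 / 3 : ℝ) * z + (9 : ℝ)) τ z := by
  simp [D0, delayCharFun]

theorem omegaStar_pos : 0 < omegaStar :=
  Real.sqrt_pos.mpr (by positivity)

theorem lt_omegaStar_sq : 520 / 18 < omegaStar ^ 2 := by
  have hsqrt : 0 < Real.sqrt 296644 := Real.sqrt_pos.mpr (by norm_num)
  rw [omegaStar, Real.sq_sqrt (by positivity)]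
  linarith

/-- There exist `δ > 0` and a continuously differentiable `λ : (τ* - δ, τ* + δ) → ℂ`
with `λ(τ*) = iω*`, `D_0(λ(τ); τ) = 0` on this interval, and `Re λ'(τ*) > 0`; i.e., the
simple purely imaginary characteristic roots of the zeroth mode cross the imaginary
axis transversally from left to right as the delay `τ` increases through `τ*`. -/
theorem hopf_transversality (τs : ℝ)
    (hmem : τs ∈ Set.Ioo 0 (2 * Real.pi / omegaStar))
    (hτs : D0 τs (Complex.I * (omegaStar : ℂ)) = 0) :
    ∃ δ : ℝ, 0 < δ ∧ ∃ lam lam' : ℝ → ℂ,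
      lam τs = Complex.I * (omegaStar : ℂ) ∧
      (∀ τ ∈ Set.Ioo (τs - δ) (τs + δ), HasDerivAt lam (lam' τ) τ) ∧
      ContinuousOn lam' (Set.Ioo (τs - δ) (τs + δ)) ∧
      (∀ τ ∈ Set.Ioo (τs - δ) (τs + δ), D0 τ (lam τ) = 0) ∧
      0 < (lam' τs).re := by
  simp only [D0_eq_delayCharFun] at hτs ⊢
  exact hopf_transversality_general omegaStar_pos.ne' (by linarith [lt_omegaStar_sq]) hτs
end
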